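/- Let d ≤ n be positive integers, σ > 0, x₁,…,x_N ∈ ℝ^n, β₁,…,β_N > 0 with α := Σᵢβᵢ, m := Σᵢβᵢxᵢ, C := Σᵢβᵢxᵢxᵢᵀ, and for b ∈ ℝ^n set v(b) := m − αb and S(b) := C − mbᵀ − bmᵀ + αbbᵀ. Assume S(b) is positive definite for every b ∈ ℝ^n. Define G(U,b) := −(1/σ²)(trace(UᵀS(b)U) − ‖v(b)‖²/α) − v(b)ᵀU(UᵀS(b)U)⁻¹Uᵀv(b) + α log det(UᵀS(b)U). If (Û, b̂) minimizes G over St(d,n) × ℝ^n, then setting μ̂ := (1/α)Ûᵀv(b̂) and Σ̂ := (1/α)ÛᵀS(b̂)Û, the quadruple (Û, b̂, μ̂, Σ̂) maximizes the function (U, b, μ, Σ) ↦ Σᵢβᵢ log f(xᵢ | μ̃, Σ̃) over all U ∈ St(d,n), b ∈ ℝ^n, μ ∈ ℝ^d, Σ ∈ SPD(d), where Σ̃ := ((1/σ²)(I_n − UUᵀ) + U Σ⁻¹ Uᵀ)⁻¹ and μ̃ := Σ̃ U Σ⁻¹ μ + b. -/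

import Mathlib

open Matrix

/-- The Gaussian density `f(x | μ, Σ)` in dimension `k`. -/
noncomputable def gaussDensity {k : ℕ} (x μ : Fin k → ℝ) (S : Matrix (Fin k) (Fin k) ℝ) : ℝ :=
  (2 * Real.pi) ^ (-(k : ℝ) / 2) * S.det ^ (-(1 : ℝ) / 2) *
    Real.exp (-(1 / 2) * ((x - μ) ⬝ᵥ (S⁻¹ *ᵥ (x - μ))))

/-- `Σ̃ = ((1/σ²)(I - UUᵀ) + U Σ⁻¹ Uᵀ)⁻¹`. -/
noncomputable def tildeSigma {d n : ℕ} (σ : ℝ) (U : Matrix (Fin n) (Fin d) ℝ)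
    (S : Matrix (Fin d) (Fin d) ℝ) : Matrix (Fin n) (Fin n) ℝ :=
  ((σ ^ 2)⁻¹ • ((1 : Matrix (Fin n) (Fin n) ℝ) - U * Uᵀ) + U * S⁻¹ * Uᵀ)⁻¹

/-- `μ̃ = Σ̃ U Σ⁻¹ μ + b`. -/
noncomputable def tildeMu {d n : ℕ} (σ : ℝ) (U : Matrix (Fin n) (Fin d) ℝ)
    (S : Matrix (Fin d) (Fin d) ℝ) (μ : Fin d → ℝ) (b : Fin n → ℝ) : Fin n → ℝ :=
  tildeSigma σ U S *ᵥ (U *ᵥ (S⁻¹ *ᵥ μ)) + b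

/-- `m = Σᵢ βᵢ xᵢ`. -/
noncomputable def mVec {n N : ℕ} (x : Fin N → Fin n → ℝ) (β : Fin N → ℝ) : Fin n → ℝ :=
  ∑ i, β i • x i

/-- `v(b) = m − α b`. -/
noncomputable def vVec {n N : ℕ} (x : Fin N → Fin n → ℝ) (β : Fin N → ℝ) (b : Fin n → ℝ) :
    Fin n → ℝ :=
  mVec x β - (∑ i, β i) • b

/-- `S(b) = C − m bᵀ − b mᵀ + α b bᵀ`. -/
noncomputable def sMat {n N : ℕ} (x : Fin N → Fin n → ℝ) (β : Fin N → ℝ) (b : Fin n → ℝ) :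
    Matrix (Fin n) (Fin n) ℝ :=
  (∑ i, β i • Matrix.vecMulVec (x i) (x i)) - Matrix.vecMulVec (mVec x β) b
    - Matrix.vecMulVec b (mVec x β) + (∑ i, β i) • Matrix.vecMulVec b b

/-- The function `G(U, b)` from the M-step of the PCA-GMM EM algorithm. -/
noncomputable def gFun {d n N : ℕ} (σ : ℝ) (x : Fin N → Fin n → ℝ) (β : Fin N → ℝ)
    (U : Matrix (Fin n) (Fin d) ℝ) (b : Fin n → ℝ) : ℝ :=
  -(σ ^ 2)⁻¹ * ((Uᵀ * sMat x β b * U).trace - (vVec x β b ⬝ᵥ vVec x β b) / (∑ i, β i))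
    - vVec x β b ⬝ᵥ ((U * (Uᵀ * sMat x β b * U)⁻¹ * Uᵀ) *ᵥ vVec x β b)
    + (∑ i, β i) * Real.log (Uᵀ * sMat x β b * U).det

/-!
For a point `a` write `S(a)` for the weighted scatter about `a`, so that the weighted Gaussian
log-likelihood with mean `a` and covariance `Σ̃` is, up to sign, a factor and a constant,
`α log det Σ̃ + tr (Σ̃⁻¹ S(a))`. On the range of `U` the matrix `Σ̃⁻¹` acts as `Σ⁻¹`, and on its
orthogonal complement as the scalar `1/σ²`; in particular `Σ̃ U = U Σ` and `μ̃ = b + U μ`.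

Let `b̄` be the weighted mean. As `S(a) = S(b̄) + v(a) v(a)ᵀ / α`, moving `a` to `b̄` never
increases the objective, and for the mean `b̄` the best `Σ` is `Uᵀ S(b̄) U / α`, by `log t ≤ t - 1`
applied to eigenvalues. Conversely `G(U, b)` is, up to a constant, the objective at
`Σ = Uᵀ S(b) U / α`, `μ = Uᵀ v(b) / α`. So, up to that constant, every value of the objective is at
least `G(U, b̄) ≥ G(Û, b̂)`, and the last bound is attained at the estimates.
-/

section LogDet

variable {k : Type*} [Fintype k] [DecidableEq k]

theorem log_det_smul {c : ℝ} (hc : c ≠ 0) {A : Matrix k k ℝ} (hA : A.det ≠ 0) :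
    Real.log (c • A).det = Fintype.card k * Real.log c + Real.log A.det := by
  rw [det_smul, Real.log_mul (pow_ne_zero _ hc) hA, Real.log_pow]

theorem inv_smul_of_ne_zero {R : Type*} [Field R] {c : R} (hc : c ≠ 0) {A : Matrix k k R}
    (hA : A.det ≠ 0) : (c • A)⁻¹ = c⁻¹ • A⁻¹ :=
  inv_smul' A (Units.mk0 c hc) hA.isUnit

theorem log_det_le_trace_sub_card {M : Matrix k k ℝ} (hM : M.PosDef) :
    Real.log M.det ≤ M.trace - Fintype.card k := by
  have hdet : M.det = ∏ i, hM.1.eigenvalues i := by simpa using hM.1.det_eq_prod_eigenvalues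
  have htrace : M.trace = ∑ i, hM.1.eigenvalues i := by
    simpa using hM.1.trace_eq_sum_eigenvalues
  calc Real.log M.det = ∑ i, Real.log (hM.1.eigenvalues i) := by
        rw [hdet, Real.log_prod fun i _ => (hM.eigenvalues_pos i).ne']
    _ ≤ ∑ i, (hM.1.eigenvalues i - 1) :=
        Finset.sum_le_sum fun i _ => Real.log_le_sub_one_of_pos (hM.eigenvalues_pos i)
    _ = M.trace - Fintype.card k := by simp [htrace]

open scoped MatrixOrder Matrix.Norms.L2Operator in
theorem log_det_add_card_le {S B : Matrix k k ℝ} (hS : S.PosDef) (hB : B.PosDef) :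
    Real.log B.det + Fintype.card k ≤ Real.log S.det + (S⁻¹ * B).trace := by
  obtain ⟨R, hR, hSR⟩ : ∃ R : Matrix k k ℝ, IsUnit R ∧ S⁻¹ = Rᴴ * R :=
    CStarAlgebra.isStrictlyPositive_iff_eq_star_mul_self.mp hS.inv.isStrictlyPositive
  have hRB : (R * B * Rᴴ).PosDef := (IsUnit.posDef_star_right_conjugate_iff hR).2 hB
  have hdet : (R * B * Rᴴ).det = S.det⁻¹ * B.det := by
    rw [← Ring.inverse_eq_inv', ← det_nonsing_inv, hSR, det_mul, det_mul, det_mul]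
    ring
  have htrace : (R * B * Rᴴ).trace = (S⁻¹ * B).trace := by
    rw [trace_mul_comm, hSR, Matrix.mul_assoc]
  have hlog := log_det_le_trace_sub_card hRB
  rw [hdet, htrace, Real.log_mul (inv_pos.2 hS.det_pos).ne' hB.det_pos.ne', Real.log_inv] at hlog
  linarith

end LogDet

section OrthoExtend

variable {m k R : Type*} [Fintype m] [DecidableEq m] [Fintype k]

/-- For `U` with orthonormal columns, the matrix that acts as `A` on the range of `U` (in the
coordinates given by the columns) and as the scalar `c` on its orthogonal complement. Both `Σ̃` and
its inverse are of this form. -/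
def orthoExtend [CommRing R] (U : Matrix m k R) (c : R) (A : Matrix k k R) : Matrix m m R :=
  c • (1 - U * Uᵀ) + U * A * Uᵀ

theorem trace_orthoExtend_mul [CommRing R] (U : Matrix m k R) (c : R) (A : Matrix k k R)
    (T : Matrix m m R) :
    (orthoExtend U c A * T).trace =
      c * (T.trace - (Uᵀ * T * U).trace) + (A * (Uᵀ * T * U)).trace := by
  have hproj : (U * Uᵀ * T).trace = (Uᵀ * T * U).trace := by
    rw [Matrix.mul_assoc, trace_mul_comm]
  have hrange : (U * A * Uᵀ * T).trace = (A * (Uᵀ * T * U)).trace := by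
    rw [Matrix.mul_assoc, Matrix.mul_assoc, trace_mul_comm, Matrix.mul_assoc, Matrix.mul_assoc]
  simp [orthoExtend, Matrix.add_mul, Matrix.sub_mul, hproj, hrange]

theorem dotProduct_orthoExtend_mulVec [CommRing R] (U : Matrix m k R) (c : R) (A : Matrix k k R)
    (w : m → R) :
    w ⬝ᵥ (orthoExtend U c A *ᵥ w) =
      c * (w ⬝ᵥ w - (Uᵀ *ᵥ w) ⬝ᵥ (Uᵀ *ᵥ w)) + (Uᵀ *ᵥ w) ⬝ᵥ (A *ᵥ (Uᵀ *ᵥ w)) := by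
  have hrange (y : k → R) : w ⬝ᵥ (U *ᵥ y) = (Uᵀ *ᵥ w) ⬝ᵥ y := by
    rw [dotProduct_mulVec, mulVec_transpose]
  simp only [orthoExtend, add_mulVec, smul_mulVec, sub_mulVec, one_mulVec, ← mulVec_mulVec,
    dotProduct_add, dotProduct_smul, dotProduct_sub, smul_eq_mul, hrange]

variable [DecidableEq k]

theorem orthoExtend_mul [CommRing R] {U : Matrix m k R} (hU : Uᵀ * U = 1) (c : R)
    (A : Matrix k k R) : orthoExtend U c A * U = U * A := by
  simp [orthoExtend, Matrix.add_mul, Matrix.sub_mul, Matrix.mul_assoc, hU]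

theorem orthoExtend_mul_orthoExtend [CommRing R] {U : Matrix m k R} (hU : Uᵀ * U = 1) (c e : R)
    (A B : Matrix k k R) :
    orthoExtend U c A * orthoExtend U e B = orthoExtend U (c * e) (A * B) := by
  have hproj : orthoExtend U c A * (1 - U * Uᵀ) = c • (1 - U * Uᵀ) := by
    rw [Matrix.mul_sub, ← Matrix.mul_assoc, orthoExtend_mul hU, orthoExtend]
    simp
  rw [orthoExtend.eq_1 U e, Matrix.mul_add, Matrix.mul_smul, hproj, ← Matrix.mul_assoc,
    ← Matrix.mul_assoc, orthoExtend_mul hU, orthoExtend, smul_smul, mul_comm e,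
    Matrix.mul_assoc U A B]

theorem inv_orthoExtend [Field R] {U : Matrix m k R} (hU : Uᵀ * U = 1) {c : R} (hc : c ≠ 0)
    {A : Matrix k k R} (hA : A.det ≠ 0) :
    (orthoExtend U c A)⁻¹ = orthoExtend U c⁻¹ A⁻¹ := by
  refine inv_eq_left_inv ?_
  rw [orthoExtend_mul_orthoExtend hU, inv_mul_cancel₀ hc, nonsing_inv_mul _ hA.isUnit]
  simp [orthoExtend]

theorem det_orthoExtend [Field R] {U : Matrix m k R} (hU : Uᵀ * U = 1) {c : R} (hc : c ≠ 0)
    (A : Matrix k k R) :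
    (orthoExtend U c A).det = c ^ Fintype.card m * (c⁻¹ ^ Fintype.card k * A.det) := by
  have hfactor : orthoExtend U c A = c • (1 + U * ((c⁻¹ • A - 1) * Uᵀ)) := by
    simp only [orthoExtend, Matrix.sub_mul, Matrix.mul_sub, Matrix.smul_mul, Matrix.mul_smul,
      smul_add, smul_sub, smul_smul, mul_inv_cancel₀ hc, one_smul, Matrix.one_mul,
      Matrix.mul_assoc]
    abel
  rw [hfactor, det_smul, det_one_add_mul_comm, Matrix.mul_assoc, hU, Matrix.mul_one,
    add_sub_cancel, det_smul]

open scoped MatrixOrder in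
theorem posSemidef_orthoExtend {U : Matrix m k ℝ} (hU : Uᵀ * U = 1) {c : ℝ} (hc : 0 ≤ c)
    {A : Matrix k k ℝ} (hA : A.PosSemidef) : (orthoExtend U c A).PosSemidef := by
  have hproj : IsStarProjection (U * Uᵀ) :=
    { isIdempotentElem := by
        rw [IsIdempotentElem, Matrix.mul_assoc, ← Matrix.mul_assoc Uᵀ, hU, Matrix.one_mul]
      isSelfAdjoint := by simp [IsSelfAdjoint, star_eq_conjTranspose] }
  exact (hproj.one_sub_nonneg.posSemidef.smul hc).add (hA.mul_mul_conjTranspose_same U)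

end OrthoExtend

theorem posDef_transpose_mul_mul {m k : Type*} [Fintype m] [Finite k] [DecidableEq k]
    {U : Matrix m k ℝ} (hU : Uᵀ * U = 1) {T : Matrix m m ℝ} (hT : T.PosDef) :
    (Uᵀ * T * U).PosDef := by
  have := Fintype.ofFinite k
  have hinj : Function.LeftInverse Uᵀ.mulVec U.mulVec := fun y => by
    rw [mulVec_mulVec, hU, one_mulVec]
  exact hT.conjTranspose_mul_mul_same hinj.injective

section Scatter

variable {n N : ℕ} (x : Fin N → Fin n → ℝ) (β : Fin N → ℝ)

theorem sMat_eq_sum (b : Fin n → ℝ) :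
    sMat x β b = ∑ i, β i • vecMulVec (x i - b) (x i - b) := by
  ext j k
  simp only [sMat, mVec, Matrix.add_apply, Matrix.sub_apply, Matrix.sum_apply, Matrix.smul_apply,
    vecMulVec_apply, Finset.sum_apply, Pi.smul_apply, Pi.sub_apply, smul_eq_mul, Finset.sum_mul,
    Finset.mul_sum, ← Finset.sum_sub_distrib, ← Finset.sum_add_distrib]
  exact Finset.sum_congr rfl fun i _ => by ring

theorem trace_mul_sMat (P : Matrix (Fin n) (Fin n) ℝ) (b : Fin n → ℝ) :
    (P * sMat x β b).trace = ∑ i, β i * ((x i - b) ⬝ᵥ (P *ᵥ (x i - b))) := by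
  simp only [sMat_eq_sum, Matrix.mul_sum, trace_sum, Matrix.mul_smul, trace_smul, mul_vecMulVec,
    trace_vecMulVec, dotProduct_comm, smul_eq_mul]

theorem vVec_add (b c : Fin n → ℝ) : vVec x β (b + c) = vVec x β b - (∑ i, β i) • c := by
  rw [vVec, vVec, smul_add, sub_add_eq_sub_sub]

/-- The weighted mean `b̄ = m / α`, the unique zero of `v` when `α ≠ 0`. -/
noncomputable def weightedMean : Fin n → ℝ :=
  (∑ i, β i)⁻¹ • mVec x β

variable {x β}

theorem vVec_weightedMean (hα : ∑ i, β i ≠ 0) : vVec x β (weightedMean x β) = 0 := by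
  rw [vVec, weightedMean, smul_inv_smul₀ hα, sub_self]

theorem sMat_eq_sMat_weightedMean_add (hα : ∑ i, β i ≠ 0) (b : Fin n → ℝ) :
    sMat x β b = sMat x β (weightedMean x β)
      + (∑ i, β i)⁻¹ • vecMulVec (vVec x β b) (vVec x β b) := by
  ext i j
  simp only [sMat, weightedMean, vVec, Matrix.add_apply, Matrix.sub_apply, Matrix.smul_apply,
    vecMulVec_apply, Pi.smul_apply, Pi.sub_apply, smul_eq_mul]
  field_simp
  ring

theorem posDef_sMat (hα : 0 < ∑ i, β i) (hS : (sMat x β (weightedMean x β)).PosDef)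
    (b : Fin n → ℝ) : (sMat x β b).PosDef := by
  rw [sMat_eq_sMat_weightedMean_add hα.ne']
  exact hS.add_posSemidef ((posSemidef_vecMulVec_self_star _).smul (inv_pos.2 hα).le)

theorem trace_mul_sMat_eq_add (hα : ∑ i, β i ≠ 0) (P : Matrix (Fin n) (Fin n) ℝ)
    (b : Fin n → ℝ) :
    (P * sMat x β b).trace = (P * sMat x β (weightedMean x β)).trace
      + (∑ i, β i)⁻¹ * (vVec x β b ⬝ᵥ (P *ᵥ vVec x β b)) := by
  rw [sMat_eq_sMat_weightedMean_add hα, Matrix.mul_add, trace_add, Matrix.mul_smul, trace_smul,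
    mul_vecMulVec, trace_vecMulVec, dotProduct_comm, smul_eq_mul]

theorem trace_orthoExtend_mul_sMat_add {k : Type*} [Fintype k] [DecidableEq k]
    {U : Matrix (Fin n) k ℝ} (hU : Uᵀ * U = 1) (hα : ∑ i, β i ≠ 0) (c : ℝ) (A : Matrix k k ℝ)
    (b : Fin n → ℝ) :
    (orthoExtend U c A * sMat x β (b + U *ᵥ ((∑ i, β i)⁻¹ • (Uᵀ *ᵥ vVec x β b)))).trace =
      (orthoExtend U c A * sMat x β b).trace
        - (∑ i, β i)⁻¹ * ((Uᵀ *ᵥ vVec x β b) ⬝ᵥ (A *ᵥ (Uᵀ *ᵥ vVec x β b))) := by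
  set v := vVec x β b
  have hshift : vVec x β (b + U *ᵥ ((∑ i, β i)⁻¹ • (Uᵀ *ᵥ v))) = v - U *ᵥ (Uᵀ *ᵥ v) := by
    rw [vVec_add, mulVec_smul, smul_inv_smul₀ hα]
  have horth : Uᵀ *ᵥ (v - U *ᵥ (Uᵀ *ᵥ v)) = 0 := by
    rw [mulVec_sub, mulVec_mulVec _ Uᵀ U, hU, one_mulVec, sub_self]
  have hpythagoras : (v - U *ᵥ (Uᵀ *ᵥ v)) ⬝ᵥ (v - U *ᵥ (Uᵀ *ᵥ v)) =
      v ⬝ᵥ v - (Uᵀ *ᵥ v) ⬝ᵥ (Uᵀ *ᵥ v) := by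
    rw [dotProduct_sub, dotProduct_mulVec _ U, ← mulVec_transpose, horth, zero_dotProduct,
      sub_zero, sub_dotProduct, dotProduct_comm (U *ᵥ _), dotProduct_mulVec, mulVec_transpose]
  rw [trace_mul_sMat_eq_add hα, trace_mul_sMat_eq_add hα _ b, hshift,
    dotProduct_orthoExtend_mulVec, dotProduct_orthoExtend_mulVec, horth, hpythagoras]
  simp only [zero_dotProduct]
  ring

theorem sum_weights_pos (hn : 0 < n) (hβ : ∀ i, 0 < β i) {b : Fin n → ℝ}
    (hS : (sMat x β b).PosDef) : 0 < ∑ i, β i := by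
  have hN : (Finset.univ : Finset (Fin N)).Nonempty := by
    by_contra hempty
    have hdiag := hS.diag_pos (i := ⟨0, hn⟩)
    simp [sMat_eq_sum, Finset.not_nonempty_iff_eq_empty.1 hempty] at hdiag
  exact Finset.sum_pos (fun i _ => hβ i) hN

end Scatter

section Gaussian

variable {n N : ℕ}

theorem log_gaussDensity {S : Matrix (Fin n) (Fin n) ℝ} (hS : 0 < S.det) (y μ : Fin n → ℝ) :
    Real.log (gaussDensity y μ S) =
      -(1 / 2) * (n * Real.log (2 * Real.pi) + Real.log S.det
        + (y - μ) ⬝ᵥ (S⁻¹ *ᵥ (y - μ))) := by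
  have hpi : 0 < 2 * Real.pi := Real.two_pi_pos
  rw [gaussDensity, Real.log_mul (by positivity) (by positivity),
    Real.log_mul (by positivity) (by positivity), Real.log_exp, Real.log_rpow hpi,
    Real.log_rpow hS]
  ring

theorem sum_log_gaussDensity {S : Matrix (Fin n) (Fin n) ℝ} (hS : 0 < S.det)
    (x : Fin N → Fin n → ℝ) (β : Fin N → ℝ) (μ : Fin n → ℝ) :
    ∑ i, β i * Real.log (gaussDensity (x i) μ S) =
      -(1 / 2) * ((∑ i, β i) * (n * Real.log (2 * Real.pi) + Real.log S.det)
        + (S⁻¹ * sMat x β μ).trace) := by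
  simp only [trace_mul_sMat, log_gaussDensity hS, Finset.sum_mul, ← Finset.sum_add_distrib,
    Finset.mul_sum]
  exact Finset.sum_congr rfl fun i _ => by ring

end Gaussian

section Tilde

variable {d n : ℕ} {σ : ℝ} {U : Matrix (Fin n) (Fin d) ℝ} {S : Matrix (Fin d) (Fin d) ℝ}

theorem tildeSigma_eq_orthoExtend (hσ : σ ≠ 0) (hU : Uᵀ * U = 1) (hS : S.det ≠ 0) :
    tildeSigma σ U S = orthoExtend U (σ ^ 2) S := by
  have hinv := inv_orthoExtend hU (inv_ne_zero (pow_ne_zero 2 hσ)) (A := S⁻¹)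
    (S.isUnit_nonsing_inv_det hS.isUnit).ne_zero
  rwa [inv_inv, nonsing_inv_nonsing_inv _ hS.isUnit] at hinv

theorem tildeMu_eq (hσ : σ ≠ 0) (hU : Uᵀ * U = 1) (hS : S.det ≠ 0) (μ : Fin d → ℝ)
    (b : Fin n → ℝ) : tildeMu σ U S μ b = b + U *ᵥ μ := by
  rw [tildeMu, tildeSigma_eq_orthoExtend hσ hU hS, mulVec_mulVec, orthoExtend_mul hU,
    mulVec_mulVec, mul_nonsing_inv_cancel_right _ _ hS.isUnit, add_comm]

theorem det_tildeSigma (hσ : σ ≠ 0) (hU : Uᵀ * U = 1) (hS : S.det ≠ 0) :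
    (tildeSigma σ U S).det = (σ ^ 2) ^ n * ((σ ^ 2)⁻¹ ^ d * S.det) := by
  rw [tildeSigma_eq_orthoExtend hσ hU hS, det_orthoExtend hU (pow_ne_zero 2 hσ),
    Fintype.card_fin, Fintype.card_fin]

end Tilde

section Deviance

variable {d n N : ℕ}

/-- The part of `-2 ∑ᵢ βᵢ log f(xᵢ | a, Σ̃)` that depends on the parameters `U`, `Σ` (here `S`) and
the Gaussian mean `a`. -/
noncomputable def deviance (σ : ℝ) (x : Fin N → Fin n → ℝ) (β : Fin N → ℝ)
    (U : Matrix (Fin n) (Fin d) ℝ) (S : Matrix (Fin d) (Fin d) ℝ) (a : Fin n → ℝ) : ℝ :=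
  (∑ i, β i) * Real.log S.det + (orthoExtend U (σ ^ 2)⁻¹ S⁻¹ * sMat x β a).trace

/-- The amount, the same for all `U` and `b`, by which `deviance` at `Σ = Uᵀ S(b) U / α`,
`μ = Uᵀ v(b) / α` exceeds `gFun`. -/
noncomputable def profileConst (d : ℕ) (σ : ℝ) (x : Fin N → Fin n → ℝ) (β : Fin N → ℝ) : ℝ :=
  (σ ^ 2)⁻¹ * (sMat x β (weightedMean x β)).trace
    + (∑ i, β i) * (d - d * Real.log (∑ i, β i))

variable {σ : ℝ} {x : Fin N → Fin n → ℝ} {β : Fin N → ℝ} {U : Matrix (Fin n) (Fin d) ℝ}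
  {S : Matrix (Fin d) (Fin d) ℝ}

theorem sum_log_gaussDensity_tilde (hσ : σ ≠ 0) (hU : Uᵀ * U = 1) (hS : 0 < S.det)
    (μ : Fin d → ℝ) (b : Fin n → ℝ) :
    ∑ i, β i * Real.log (gaussDensity (x i) (tildeMu σ U S μ b) (tildeSigma σ U S)) =
      -(1 / 2) * ((∑ i, β i) * (n * Real.log (2 * Real.pi) + (n - d) * Real.log (σ ^ 2))
        + deviance σ x β U S (b + U *ᵥ μ)) := by
  have hdet := det_tildeSigma hσ hU hS.ne'
  have hlog : Real.log (tildeSigma σ U S).det = (n - d) * Real.log (σ ^ 2) + Real.log S.det := by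
    rw [hdet, Real.log_mul (by positivity) (by positivity),
      Real.log_mul (by positivity) (by positivity), Real.log_pow (σ ^ 2),
      Real.log_pow (σ ^ 2)⁻¹, Real.log_inv]
    ring
  rw [sum_log_gaussDensity (by rw [hdet]; positivity), hlog, tildeMu_eq hσ hU hS.ne',
    tildeSigma_eq_orthoExtend hσ hU hS.ne', inv_orthoExtend hU (pow_ne_zero 2 hσ) hS.ne',
    deviance]
  ring

theorem deviance_weightedMean_le (hα : 0 < ∑ i, β i) (hU : Uᵀ * U = 1) (hS : S.PosSemidef)
    (a : Fin n → ℝ) : deviance σ x β U S (weightedMean x β) ≤ deviance σ x β U S a := by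
  have hquad := (posSemidef_orthoExtend hU (inv_nonneg.2 (sq_nonneg σ))
    hS.inv).dotProduct_mulVec_nonneg (vVec x β a)
  rw [star_trivial] at hquad
  rw [deviance, deviance, trace_mul_sMat_eq_add hα.ne' _ a]
  linarith [mul_nonneg (inv_nonneg.2 hα.le) hquad]

theorem deviance_inv_smul_scatter (hα : ∑ i, β i ≠ 0) {a : Fin n → ℝ}
    (hA : (Uᵀ * sMat x β a * U).det ≠ 0) :
    deviance σ x β U ((∑ i, β i)⁻¹ • (Uᵀ * sMat x β a * U)) a =
      (∑ i, β i) * (Real.log (Uᵀ * sMat x β a * U).det - d * Real.log (∑ i, β i) + d)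
        + (σ ^ 2)⁻¹ * ((sMat x β a).trace - (Uᵀ * sMat x β a * U).trace) := by
  rw [deviance, log_det_smul (inv_ne_zero hα) hA, trace_orthoExtend_mul,
    inv_smul_of_ne_zero (inv_ne_zero hα) hA, Matrix.smul_mul, nonsing_inv_mul _ hA.isUnit,
    trace_smul, trace_one, Fintype.card_fin, Real.log_inv, inv_inv, smul_eq_mul]
  ring

theorem deviance_inv_smul_scatter_le (hα : 0 < ∑ i, β i) (hU : Uᵀ * U = 1) (hS : S.PosDef)
    {a : Fin n → ℝ} (ha : (sMat x β a).PosDef) :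
    deviance σ x β U ((∑ i, β i)⁻¹ • (Uᵀ * sMat x β a * U)) a ≤ deviance σ x β U S a := by
  have hA := posDef_transpose_mul_mul hU ha
  have hlog := mul_le_mul_of_nonneg_left
    (log_det_add_card_le hS (hA.smul (inv_pos.2 hα))) hα.le
  rw [log_det_smul (inv_ne_zero hα.ne') hA.det_pos.ne', Real.log_inv, Matrix.mul_smul, trace_smul,
    smul_eq_mul, Fintype.card_fin, mul_add _ _ (_ * _), mul_inv_cancel_left₀ hα.ne'] at hlog
  rw [deviance_inv_smul_scatter hα.ne' hA.det_pos.ne', deviance, trace_orthoExtend_mul]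
  linarith

theorem deviance_profile (hα : ∑ i, β i ≠ 0) (hU : Uᵀ * U = 1) {b : Fin n → ℝ}
    (hA : (Uᵀ * sMat x β b * U).det ≠ 0) :
    deviance σ x β U ((∑ i, β i)⁻¹ • (Uᵀ * sMat x β b * U))
        (b + U *ᵥ ((∑ i, β i)⁻¹ • (Uᵀ *ᵥ vVec x β b))) =
      gFun σ x β U b + profileConst d σ x β := by
  set A := Uᵀ * sMat x β b * U
  set v := vVec x β b with hv
  have hmove : deviance σ x β U ((∑ i, β i)⁻¹ • A) (b + U *ᵥ ((∑ i, β i)⁻¹ • (Uᵀ *ᵥ v))) =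
      deviance σ x β U ((∑ i, β i)⁻¹ • A) b - (Uᵀ *ᵥ v) ⬝ᵥ (A⁻¹ *ᵥ (Uᵀ *ᵥ v)) := by
    rw [deviance, deviance, hv, trace_orthoExtend_mul_sMat_add hU hα,
      inv_smul_of_ne_zero (inv_ne_zero hα) hA, inv_inv, smul_mulVec, dotProduct_smul, smul_eq_mul,
      inv_mul_cancel_left₀ hα]
    ring
  have hquad : v ⬝ᵥ ((U * A⁻¹ * Uᵀ) *ᵥ v) = (Uᵀ *ᵥ v) ⬝ᵥ (A⁻¹ *ᵥ (Uᵀ *ᵥ v)) := by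
    rw [← mulVec_mulVec, ← mulVec_mulVec, dotProduct_mulVec, ← mulVec_transpose]
  have htrace : (sMat x β b).trace =
      (sMat x β (weightedMean x β)).trace + (∑ i, β i)⁻¹ * (v ⬝ᵥ v) := by
    simpa using trace_mul_sMat_eq_add hα 1 b
  rw [hmove, deviance_inv_smul_scatter hα hA, htrace, gFun, profileConst, hquad]
  ring

theorem gFun_weightedMean_add_profileConst_le_deviance (hα : 0 < ∑ i, β i) (hU : Uᵀ * U = 1)
    (hS : S.PosDef) (hpos : (sMat x β (weightedMean x β)).PosDef) (a : Fin n → ℝ) :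
    gFun σ x β U (weightedMean x β) + profileConst d σ x β ≤ deviance σ x β U S a :=
  calc gFun σ x β U (weightedMean x β) + profileConst d σ x β
      = deviance σ x β U ((∑ i, β i)⁻¹ • (Uᵀ * sMat x β (weightedMean x β) * U))
          (weightedMean x β) := by
        rw [← deviance_profile hα.ne' hU (posDef_transpose_mul_mul hU hpos).det_pos.ne',
          vVec_weightedMean hα.ne', mulVec_zero, smul_zero, mulVec_zero, add_zero]
    _ ≤ deviance σ x β U S (weightedMean x β) := deviance_inv_smul_scatter_le hα hU hS hpos
    _ ≤ deviance σ x β U S a := deviance_weightedMean_le hα hU hS.posSemidef a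

end Deviance

theorem stmt_14_general {d n N : ℕ} {σ : ℝ} (hσ : σ ≠ 0) {x : Fin N → Fin n → ℝ}
    {β : Fin N → ℝ} (hα : 0 < ∑ i, β i) (hpos : (sMat x β (weightedMean x β)).PosDef)
    {Uhat : Matrix (Fin n) (Fin d) ℝ} {bhat : Fin n → ℝ} (hUhat : Uhatᵀ * Uhat = 1)
    (hmin : ∀ (U : Matrix (Fin n) (Fin d) ℝ) (b : Fin n → ℝ), Uᵀ * U = 1 →
      gFun σ x β Uhat bhat ≤ gFun σ x β U b)
    {muhat : Fin d → ℝ} (hmuhat : muhat = (∑ i, β i)⁻¹ • (Uhatᵀ *ᵥ vVec x β bhat))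
    {Sighat : Matrix (Fin d) (Fin d) ℝ}
    (hSighat : Sighat = (∑ i, β i)⁻¹ • (Uhatᵀ * sMat x β bhat * Uhat)) :
    Sighat.PosDef ∧
      ∀ (U : Matrix (Fin n) (Fin d) ℝ) (b : Fin n → ℝ) (μ : Fin d → ℝ)
        (S : Matrix (Fin d) (Fin d) ℝ), Uᵀ * U = 1 → S.PosDef →
        ∑ i, β i * Real.log (gaussDensity (x i) (tildeMu σ U S μ b) (tildeSigma σ U S))
          ≤ ∑ i, β i * Real.log (gaussDensity (x i) (tildeMu σ Uhat Sighat muhat bhat)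
              (tildeSigma σ Uhat Sighat)) := by
  have hA := posDef_transpose_mul_mul hUhat (posDef_sMat hα hpos bhat)
  have hSig : Sighat.PosDef := hSighat ▸ hA.smul (inv_pos.2 hα)
  refine ⟨hSig, fun U b μ S hU hS => ?_⟩
  have hdeviance : deviance σ x β Uhat Sighat (bhat + Uhat *ᵥ muhat) ≤
      deviance σ x β U S (b + U *ᵥ μ) :=
    calc deviance σ x β Uhat Sighat (bhat + Uhat *ᵥ muhat)
        = gFun σ x β Uhat bhat + profileConst d σ x β := by
          rw [hSighat, hmuhat, deviance_profile hα.ne' hUhat hA.det_pos.ne']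
      _ ≤ gFun σ x β U (weightedMean x β) + profileConst d σ x β := by gcongr; exact hmin U _ hU
      _ ≤ deviance σ x β U S (b + U *ᵥ μ) :=
          gFun_weightedMean_add_profileConst_le_deviance hα hU hS hpos _
  rw [sum_log_gaussDensity_tilde hσ hU hS.det_pos, sum_log_gaussDensity_tilde hσ hUhat hSig.det_pos]
  linarith

theorem stmt_14 (d n N : ℕ) (hd : 0 < d) (hn : 0 < n) (hdn : d ≤ n)
    (σ : ℝ) (hσ : 0 < σ)
    (x : Fin N → Fin n → ℝ) (β : Fin N → ℝ) (hβ : ∀ i, 0 < β i)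
    (hSpos : ∀ b : Fin n → ℝ, (sMat x β b).PosDef)
    (Uhat : Matrix (Fin n) (Fin d) ℝ) (bhat : Fin n → ℝ) (hUhat : Uhatᵀ * Uhat = 1)
    (hmin : ∀ (U : Matrix (Fin n) (Fin d) ℝ) (b : Fin n → ℝ), Uᵀ * U = 1 →
      gFun σ x β Uhat bhat ≤ gFun σ x β U b)
    (muhat : Fin d → ℝ) (hmuhat : muhat = (∑ i, β i)⁻¹ • (Uhatᵀ *ᵥ vVec x β bhat))
    (Sighat : Matrix (Fin d) (Fin d) ℝ)
    (hSighat : Sighat = (∑ i, β i)⁻¹ • (Uhatᵀ * sMat x β bhat * Uhat)) :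
    Sighat.PosDef ∧
      ∀ (U : Matrix (Fin n) (Fin d) ℝ) (b : Fin n → ℝ) (μ : Fin d → ℝ)
        (S : Matrix (Fin d) (Fin d) ℝ), Uᵀ * U = 1 → S.PosDef →
        ∑ i, β i * Real.log (gaussDensity (x i) (tildeMu σ U S μ b) (tildeSigma σ U S))
          ≤ ∑ i, β i * Real.log
              (gaussDensity (x i) (tildeMu σ Uhat Sighat muhat bhat) (tildeSigma σ Uhat Sighat)) := by
  exact stmt_14_general hσ.ne' (sum_weights_pos hn hβ (hSpos 0)) (hSpos _) hUhat hmin hmuhat hSighat
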